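/- For any positive integers a and k, the centralizer of the word a^k (a repeated k times) equals the centralizer of the single-letter word a: C(a^k) = C(a). -/

import Mathlib

namespace Plactic

/-- Insert `x` into a weakly increasing row, returning the new row and the bumped entry. -/
def rowInsert (x : ℕ) : List ℕ → List ℕ × Option ℕ
  | [] => ([x], none)
  | y :: ys =>
    if x < y then (x :: ys, some y)
    else
      let p := rowInsert x ys
      (y :: p.1, p.2)

/-- RSK insertion of `x` into a tableau given as a list of rows. -/
def tInsert (x : ℕ) : List (List ℕ) → List (List ℕ)
  | [] => [[x]]
  | r :: rs =>
    match rowInsert x r with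
    | (r', none) => r' :: rs
    | (r', some y) => r' :: tInsert y rs

/-- The RSK insertion tableau of a word. -/
def P (w : List ℕ) : List (List ℕ) := w.foldl (fun t x => tInsert x t) []

/-- The `i`-th row (0-indexed) of the insertion tableau of `w`. -/
def row (w : List ℕ) (i : ℕ) : List ℕ := (P w).getD i []

/-- The `j`-th column (0-indexed) of a tableau, read top to bottom. -/
def col (T : List (List ℕ)) (j : ℕ) : List ℕ := T.filterMap (fun r => r[j]?)

/-- An elementary Knuth transposition. -/
inductive KStep : List ℕ → List ℕ → Prop
  | k1 (x y : List ℕ) (a b c : ℕ) : a ≤ b → b < c →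
      KStep (x ++ [a, c, b] ++ y) (x ++ [c, a, b] ++ y)
  | k2 (x y : List ℕ) (a b c : ℕ) : a < b → b ≤ c →
      KStep (x ++ [b, a, c] ++ y) (x ++ [b, c, a] ++ y)

/-- Knuth equivalence: the equivalence relation generated by Knuth transpositions. -/
def KEquiv : List ℕ → List ℕ → Prop := Relation.EqvGen KStep

/-- The centralizer of `u` in the plactic monoid. -/
def Cent (u : List ℕ) : Set (List ℕ) := {w | KEquiv (u ++ w) (w ++ u)}

end Plactic

/-!
The length of the longest weakly increasing subword with letters in a given interval is a Knuth
invariant. If `w` commutes with `a ^ k`, it commutes with arbitrarily high powers `a ^ m`, and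
comparing `w a ^ m` with `a ^ m w` shows that no weakly increasing subword of `w` is longer than
the number of `a`s in `w`. On the other hand, column insertion makes `w` equivalent to a product of
strictly decreasing columns, as many as a longest weakly increasing subword has letters. Each column
contains `a` at most once, so each contains `a` exactly once; and a column containing `a` commutes
with `a`. Thus commuting with `a ^ k` is a condition on `w` that does not depend on `k`.
-/

namespace Plactic

open List Set

section Lists

variable {α : Type*}

theorem exists_append_of_pairwise {r : α → α → Prop} {p : α → Prop}
    (hp : ∀ ⦃x y⦄, r x y → p y → p x) {l : List α} (hl : l.Pairwise r) :
    ∃ l₁ l₂, l = l₁ ++ l₂ ∧ (∀ x ∈ l₁, p x) ∧ ∀ x ∈ l₂, ¬ p x := by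
  induction l with
  | nil => exact ⟨[], [], by simp⟩
  | cons b l ih =>
    rw [pairwise_cons] at hl
    by_cases hb : p b
    · obtain ⟨l₁, l₂, rfl, h₁, h₂⟩ := ih hl.2
      exact ⟨b :: l₁, l₂, rfl, forall_mem_cons.2 ⟨hb, h₁⟩, h₂⟩
    · exact ⟨[], b :: l, rfl, by simp, forall_mem_cons.2 ⟨hb, fun x hx h => hb (hp (hl.1 x hx) h)⟩⟩

theorem sublist_triple_iff {s : List α} {p q r : α} :
    s <+ [p, q, r] ↔ s = [] ∨ s = [p] ∨ s = [q] ∨ s = [p, q] ∨ s = [r] ∨ s = [p, r] ∨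
      s = [q, r] ∨ s = [p, q, r] := by
  rw [← mem_sublists, show sublists [p, q, r] =
    [[], [p], [q], [p, q], [r], [p, r], [q, r], [p, q, r]] from rfl]
  simp

variable [DecidableEq α]

theorem length_le_count_of_sublist {a : α} {s l : List α} (hs : s <+ l) (h : ∀ x ∈ s, x = a) :
    s.length ≤ l.count a :=
  replicate_sublist_iff.1 (eq_replicate_of_mem h ▸ hs)

theorem mem_of_length_le_count_flatten {a : α} {L : List (List α)} (hL : ∀ c ∈ L, c.Nodup)
    (hcount : L.length ≤ L.flatten.count a) : ∀ c ∈ L, a ∈ c := by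
  by_contra! ⟨c, hcL, hac⟩
  have hlt : (L.map (count a)).sum < (L.map fun _ => 1).sum :=
    sum_lt_sum _ _ (fun d hd => nodup_iff_count_le_one.1 (hL d hd) a)
      ⟨c, hcL, by simp [count_eq_zero_of_not_mem hac]⟩
  rw [← count_flatten, map_const', sum_replicate, smul_eq_mul, mul_one] at hlt
  exact hcount.not_gt hlt

end Lists

section KnuthEquivalence

variable {u v w x y : List ℕ}

theorem KEquiv.refl (u : List ℕ) : KEquiv u u := Relation.EqvGen.refl u

theorem KEquiv.symm (h : KEquiv u v) : KEquiv v u := Relation.EqvGen.symm _ _ h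

theorem KEquiv.trans (h₁ : KEquiv u v) (h₂ : KEquiv v w) : KEquiv u w :=
  Relation.EqvGen.trans _ _ _ h₁ h₂

instance : Trans KEquiv KEquiv KEquiv := ⟨KEquiv.trans⟩

theorem KEquiv.rel_of_kStep {r : List ℕ → List ℕ → Prop} (hr : Equivalence r)
    (hstep : ∀ ⦃u v⦄, KStep u v → r u v) (h : KEquiv u v) : r u v :=
  hr.eqvGen_iff.1 (Relation.EqvGen.mono hstep _ _ h)

theorem KStep.append_append (x y : List ℕ) (h : KStep u v) : KStep (x ++ u ++ y) (x ++ v ++ y) := by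
  cases h with
  | k1 x' y' a b c hab hbc => simpa using KStep.k1 (x ++ x') (y' ++ y) a b c hab hbc
  | k2 x' y' a b c hab hbc => simpa using KStep.k2 (x ++ x') (y' ++ y) a b c hab hbc

theorem KEquiv.append_append (x y : List ℕ) (h : KEquiv u v) :
    KEquiv (x ++ u ++ y) (x ++ v ++ y) :=
  h.rel_of_kStep (r := fun u v => KEquiv (x ++ u ++ y) (x ++ v ++ y))
    ((Relation.EqvGen.is_equivalence KStep).comap (x ++ · ++ y))
    fun _ _ h => Relation.EqvGen.rel _ _ (h.append_append x y)

theorem KEquiv.append_left (x : List ℕ) (h : KEquiv u v) : KEquiv (x ++ u) (x ++ v) := by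
  simpa using h.append_append x []

theorem KEquiv.append_right (y : List ℕ) (h : KEquiv u v) : KEquiv (u ++ y) (v ++ y) :=
  h.append_append [] y

theorem KEquiv.perm (h : KEquiv u v) : u ~ v :=
  h.rel_of_kStep (Perm.eqv ℕ) fun _ _ h => by
    cases h with
    | k1 x y a b c => exact ((Perm.swap c a [b]).append_left x).append_right y
    | k2 x y a b c => exact (((Perm.swap c a []).cons b).append_left x).append_right y

theorem kEquiv_swap_left {a b c : ℕ} (hab : a ≤ b) (hbc : b < c) (w : List ℕ) :
    KEquiv (a :: c :: b :: w) (c :: a :: b :: w) :=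
  Relation.EqvGen.rel _ _ (KStep.k1 [] w a b c hab hbc)

theorem kEquiv_swap_right {a b c : ℕ} (hab : a < b) (hbc : b ≤ c) (w : List ℕ) :
    KEquiv (b :: a :: c :: w) (b :: c :: a :: w) :=
  Relation.EqvGen.rel _ _ (KStep.k2 [] w a b c hab hbc)

end KnuthEquivalence

section Centralizer

variable {u v w : List ℕ}

theorem mem_cent_comm : v ∈ Cent u ↔ u ∈ Cent v := ⟨KEquiv.symm, KEquiv.symm⟩

theorem mem_cent_congr (h : KEquiv v w) : v ∈ Cent u ↔ w ∈ Cent u :=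
  ⟨fun hv => ((h.symm.append_left u).trans hv).trans (h.append_right u),
    fun hw => ((h.append_left u).trans hw).trans (h.symm.append_right u)⟩

theorem append_mem_cent (hv : v ∈ Cent u) (hw : w ∈ Cent u) : v ++ w ∈ Cent u := by
  have hv' : KEquiv (u ++ v ++ w) (v ++ u ++ w) := hv.append_right w
  have hw' : KEquiv (v ++ (u ++ w)) (v ++ (w ++ u)) := hw.append_left v
  simp only [append_assoc] at hv' hw'
  simpa [Cent] using hv'.trans hw'

theorem flatten_mem_cent {L : List (List ℕ)} (hL : ∀ c ∈ L, c ∈ Cent u) : L.flatten ∈ Cent u := by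
  induction L with
  | nil => simpa [Cent] using KEquiv.refl u
  | cons c L ih =>
    rw [forall_mem_cons] at hL
    exact append_mem_cent hL.1 (ih hL.2)

theorem cent_subset_cent_flatten_replicate (n : ℕ) (u : List ℕ) :
    Cent u ⊆ Cent (replicate n u).flatten := fun _ hw =>
  mem_cent_comm.2 (flatten_mem_cent fun _ hc => eq_of_mem_replicate hc ▸ mem_cent_comm.1 hw)

end Centralizer

section IncreasingSubwords

variable {u v w : List ℕ} {I : Set ℕ} {a k m n : ℕ}

/-- `w` has a weakly increasing subword of length `n` all of whose letters lie in `I`. For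
order-connected `I` this is invariant under Knuth equivalence; it serves as a form of Greene's
invariant that needs no maximum over subwords. -/
def HasIncSubword (w : List ℕ) (I : Set ℕ) (n : ℕ) : Prop :=
  ∃ s, s <+ w ∧ s.Pairwise (· ≤ ·) ∧ s.length = n ∧ ∀ z ∈ s, z ∈ I

theorem HasIncSubword.append_append
    (h : ∀ (I : Set ℕ) [I.OrdConnected] (n : ℕ), HasIncSubword u I n → HasIncSubword v I n)
    [I.OrdConnected] (x y : List ℕ) (hu : HasIncSubword (x ++ u ++ y) I n) :
    HasIncSubword (x ++ v ++ y) I n := by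
  obtain ⟨s, hs, hsort, rfl, hI⟩ := hu
  obtain ⟨s', s₃, rfl, hs', h₃⟩ := sublist_append_iff.1 hs
  obtain ⟨s₁, s₂, rfl, h₁, h₂⟩ := sublist_append_iff.1 hs'
  simp only [pairwise_append, mem_append] at hsort hI
  obtain ⟨⟨p₁, p₂, p₁₂⟩, p₃, p₁₃⟩ := hsort
  -- The middle part is replaced by one whose letters still fit between those of `s₁` and `s₃`.
  let J : Set ℕ := {z | z ∈ I ∧ (∀ i ∈ s₁, i ≤ z) ∧ ∀ j ∈ s₃, z ≤ j}
  have hJ : J.OrdConnected := ⟨fun b hb c hc z hz =>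
    ⟨OrdConnected.out ‹_› hb.1 hc.1 hz, fun i hi => (hb.2.1 i hi).trans hz.1,
      fun j hj => hz.2.trans (hc.2.2 j hj)⟩⟩
  obtain ⟨t, ht, htsort, hlen, htJ⟩ := h J s₂.length
    ⟨s₂, h₂, p₂, rfl, fun z hz =>
      ⟨hI z (.inl (.inr hz)), fun i hi => p₁₂ i hi z hz, p₁₃ z (.inr hz)⟩⟩
  refine ⟨s₁ ++ t ++ s₃, (h₁.append ht).append h₃, ?_, by simp [hlen], ?_⟩
  · simp only [pairwise_append, mem_append]
    refine ⟨⟨p₁, htsort, fun i hi z hz => (htJ z hz).2.1 i hi⟩, p₃, ?_⟩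
    rintro i (hi | hi) j hj
    · exact p₁₃ i (.inl hi) j hj
    · exact (htJ i hi).2.2 j hj
  · simp only [mem_append]
    rintro z ((hz | hz) | hz)
    · exact hI z (.inl (.inl hz))
    · exact (htJ z hz).1
    · exact hI z (.inr hz)

theorem HasIncSubword.of_forall_sublist {a c p q : ℕ}
    (h : ∀ s, s <+ u → s.Pairwise (· ≤ ·) → s <+ v ∨ s = [a, c]) (hv : [p, q] <+ v)
    (hap : a ≤ p) (hpq : p ≤ q) (hqc : q ≤ c) [I.OrdConnected] (hu : HasIncSubword u I n) :
    HasIncSubword v I n := by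
  obtain ⟨s, hs, hsort, rfl, hI⟩ := hu
  obtain hsv | rfl := h s hs hsort
  · exact ⟨s, hsv, hsort, rfl, hI⟩
  · have hac : Icc a c ⊆ I := OrdConnected.out ‹_› (hI a (by simp)) (hI c (by simp))
    have hp : p ∈ I := hac ⟨hap, hpq.trans hqc⟩
    have hq : q ∈ I := hac ⟨hap.trans hpq, hqc⟩
    exact ⟨[p, q], hv, by simpa using hpq, rfl, by simp [hp, hq]⟩

theorem hasIncSubword_knuth_left {a b c : ℕ} (hab : a ≤ b) (hbc : b < c) [I.OrdConnected] :
    HasIncSubword [a, c, b] I n ↔ HasIncSubword [c, a, b] I n := by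
  constructor <;>
    refine .of_forall_sublist (a := a) (c := c) (p := a) (q := b) (fun s hs hsort => ?_) (by simp)
      le_rfl hab hbc.le <;>
    rcases sublist_triple_iff.1 hs with rfl | rfl | rfl | rfl | rfl | rfl | rfl | rfl <;>
    (simp at hsort ⊢; try omega)

theorem hasIncSubword_knuth_right {a b c : ℕ} (hab : a < b) (hbc : b ≤ c) [I.OrdConnected] :
    HasIncSubword [b, a, c] I n ↔ HasIncSubword [b, c, a] I n := by
  constructor <;>
    refine .of_forall_sublist (a := a) (c := c) (p := b) (q := c) (fun s hs hsort => ?_) (by simp)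
      hab.le hbc le_rfl <;>
    rcases sublist_triple_iff.1 hs with rfl | rfl | rfl | rfl | rfl | rfl | rfl | rfl <;>
    (simp at hsort ⊢; try omega)

theorem KStep.hasIncSubword_iff (h : KStep u v) (I : Set ℕ) [I.OrdConnected] (n : ℕ) :
    HasIncSubword u I n ↔ HasIncSubword v I n := by
  cases h with
  | k1 x y a b c hab hbc =>
    exact ⟨.append_append (fun _ _ _ => (hasIncSubword_knuth_left hab hbc).1) x y,
      .append_append (fun _ _ _ => (hasIncSubword_knuth_left hab hbc).2) x y⟩
  | k2 x y a b c hab hbc =>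
    exact ⟨.append_append (fun _ _ _ => (hasIncSubword_knuth_right hab hbc).1) x y,
      .append_append (fun _ _ _ => (hasIncSubword_knuth_right hab hbc).2) x y⟩

theorem KEquiv.hasIncSubword_iff (h : KEquiv u v) [I.OrdConnected] :
    HasIncSubword u I n ↔ HasIncSubword v I n :=
  h.rel_of_kStep (r := fun u v => HasIncSubword u I n ↔ HasIncSubword v I n)
    ⟨fun _ => .rfl, .symm, .trans⟩ fun _ _ h => h.hasIncSubword_iff I n

theorem HasIncSubword.append_replicate (h : HasIncSubword w (Iic a) n) (m : ℕ) :
    HasIncSubword (w ++ replicate m a) (Iic a) (n + m) := by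
  obtain ⟨s, hs, hsort, rfl, hle⟩ := h
  refine ⟨s ++ replicate m a, hs.append_right _, ?_, by simp, ?_⟩
  · refine pairwise_append.2 ⟨hsort, by simp, fun i hi j hj => ?_⟩
    exact eq_of_mem_replicate hj ▸ hle i hi
  · exact forall_mem_append.2 ⟨hle, fun z hz => (eq_of_mem_replicate hz).le⟩

theorem HasIncSubword.replicate_append (h : HasIncSubword w (Ici a) n) (m : ℕ) :
    HasIncSubword (replicate m a ++ w) (Ici a) (m + n) := by
  obtain ⟨s, hs, hsort, rfl, hge⟩ := h
  refine ⟨replicate m a ++ s, hs.append_left _, ?_, by simp, ?_⟩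
  · refine pairwise_append.2 ⟨by simp, hsort, fun i hi j hj => ?_⟩
    exact eq_of_mem_replicate hi ▸ hge j hj
  · exact forall_mem_append.2 ⟨fun z hz => (eq_of_mem_replicate hz).ge, hge⟩

theorem HasIncSubword.le_add_count_of_replicate_append
    (h : HasIncSubword (replicate m a ++ w) (Iic a) n) (hn : w.length < n) :
    n ≤ m + w.count a := by
  obtain ⟨s, hs, hsort, rfl, hle⟩ := h
  obtain ⟨t, s', rfl, ht, hs'⟩ := sublist_append_iff.1 hs
  obtain _ | ⟨b, t⟩ := t
  · exact absurd hs'.length_le hn.not_ge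
  have hb : b = a := eq_of_mem_replicate (ht.subset mem_cons_self)
  have hsa : ∀ z ∈ s', z = a := fun z hz =>
    le_antisymm (hle z (by simp [hz])) (hb ▸ (pairwise_append.1 hsort).2.2 b mem_cons_self z hz)
  rw [length_append]
  exact add_le_add (by simpa using ht.length_le) (length_le_count_of_sublist hs' hsa)

theorem HasIncSubword.le_count_add_of_append_replicate
    (h : HasIncSubword (w ++ replicate m a) (Ici a) n) (hn : w.length < n) :
    n ≤ w.count a + m := by
  obtain ⟨s, hs, hsort, rfl, hge⟩ := h
  obtain ⟨s', t, rfl, hs', ht⟩ := sublist_append_iff.1 hs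
  obtain _ | ⟨b, t⟩ := t
  · exact absurd hs'.length_le (by simpa using hn)
  have hb : b = a := eq_of_mem_replicate (ht.subset mem_cons_self)
  have hsa : ∀ z ∈ s', z = a := fun z hz =>
    le_antisymm (hb ▸ (pairwise_append.1 hsort).2.2 z hz b mem_cons_self) (hge z (by simp [hz]))
  rw [length_append]
  exact add_le_add (length_le_count_of_sublist hs' hsa) (by simpa using ht.length_le)

theorem exists_length_lt_mem_cent_replicate (hk : 0 < k) (hw : w ∈ Cent (replicate k a)) :
    ∃ m, w.length < m ∧ w ∈ Cent (replicate m a) := by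
  refine ⟨(w.length + 1) * k, Nat.le_mul_of_pos_right _ hk, ?_⟩
  simpa only [flatten_replicate_replicate] using
    cent_subset_cent_flatten_replicate (w.length + 1) _ hw

theorem HasIncSubword.le_count_of_Iic (h : HasIncSubword w (Iic a) n) (hk : 0 < k)
    (hw : w ∈ Cent (replicate k a)) : n ≤ w.count a := by
  obtain ⟨m, hm, hwm⟩ := exists_length_lt_mem_cent_replicate hk hw
  have h' := (KEquiv.hasIncSubword_iff hwm).2 (h.append_replicate m)
  have := h'.le_add_count_of_replicate_append (by omega)
  omega

theorem HasIncSubword.le_count_of_Ici (h : HasIncSubword w (Ici a) n) (hk : 0 < k)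
    (hw : w ∈ Cent (replicate k a)) : n ≤ w.count a := by
  obtain ⟨m, hm, hwm⟩ := exists_length_lt_mem_cent_replicate hk hw
  have h' := (KEquiv.hasIncSubword_iff hwm).1 (h.replicate_append m)
  have := h'.le_count_add_of_append_replicate (by omega)
  omega

theorem HasIncSubword.exists_append (h : HasIncSubword w univ n) (a : ℕ) :
    ∃ w₁ w₂ n₁ n₂, w = w₁ ++ w₂ ∧ n = n₁ + n₂ ∧
      HasIncSubword w₁ (Iic a) n₁ ∧ HasIncSubword w₂ (Ici a) n₂ := by
  obtain ⟨s, hs, hsort, rfl, -⟩ := h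
  obtain ⟨s₁, s₂, rfl, hlt, hge⟩ :=
    exists_append_of_pairwise (p := (· < a)) (fun _ _ => lt_of_le_of_lt) hsort
  obtain ⟨w₁, w₂, rfl, h₁, h₂⟩ := append_sublist_iff.1 hs
  have hsort' := pairwise_append.1 hsort
  exact ⟨w₁, w₂, s₁.length, s₂.length, rfl, length_append,
    ⟨s₁, h₁, hsort'.1, rfl, fun z hz => (hlt z hz).le⟩,
    ⟨s₂, h₂, hsort'.2.1, rfl, fun z hz => not_lt.1 (hge z hz)⟩⟩

theorem HasIncSubword.mono (h : HasIncSubword u I n) (huv : u <+ v) : HasIncSubword v I n := by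
  obtain ⟨s, hs, h⟩ := h
  exact ⟨s, hs.trans huv, h⟩

theorem HasIncSubword.le_count (h : HasIncSubword w univ n) (hk : 0 < k)
    (hw : w ∈ Cent (replicate k a)) : n ≤ w.count a := by
  obtain ⟨w₁, w₂, n₁, n₂, rfl, rfl, h₁, h₂⟩ := h.exists_append a
  -- The letters `a` of the other factor can be adjoined to either half.
  have h₁' : n₁ + w₂.count a ≤ (w₁ ++ w₂).count a :=
    ((h₁.append_replicate _).mono
      ((replicate_sublist_iff.2 le_rfl).append_left w₁)).le_count_of_Iic hk hw
  have h₂' : w₁.count a + n₂ ≤ (w₁ ++ w₂).count a :=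
    ((h₂.replicate_append _).mono
      ((replicate_sublist_iff.2 le_rfl).append_right w₂)).le_count_of_Ici hk hw
  rw [count_append] at *
  omega

end IncreasingSubwords

section Columns

variable {c d e w : List ℕ} {L : List (List ℕ)} {a x y : ℕ}

theorem kEquiv_cons_of_pairwise_gt (hxy : x ≤ y) (he : (x :: e).Pairwise (· > ·)) :
    KEquiv (x :: y :: e) (x :: (e ++ [y])) := by
  induction e generalizing x with
  | nil => exact .refl _
  | cons p e ih =>
    obtain ⟨hx, he⟩ := pairwise_cons.1 he
    have hpx : p < x := hx p mem_cons_self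
    calc KEquiv (x :: y :: p :: e) (x :: p :: y :: e) := (kEquiv_swap_right hpx hxy e).symm
      KEquiv _ (x :: p :: (e ++ [y])) := (ih (hpx.le.trans hxy) he).append_left [x]

/-- Column insertion: `x` enters a column in the place of `y`, its least letter `≥ x`. -/
theorem kEquiv_bump (hxy : x ≤ y) (hc : (d ++ y :: e).Pairwise (· > ·)) (he : ∀ z ∈ e, z < x) :
    KEquiv (x :: (d ++ y :: e)) (d ++ x :: (e ++ [y])) := by
  induction d with
  | nil => exact kEquiv_cons_of_pairwise_gt hxy (pairwise_cons.2 ⟨he, hc.of_cons⟩)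
  | cons p d ih =>
    obtain ⟨hp, hc⟩ := pairwise_cons.1 hc
    refine .trans ?_ ((ih hc).append_left [p])
    obtain _ | ⟨q, d⟩ := d
    · exact kEquiv_swap_left hxy (hp y (by simp)) e
    · have hyq : y < q := rel_of_pairwise_cons hc (by simp)
      exact kEquiv_swap_left (hxy.trans hyq.le) (hp q (by simp)) _

theorem mem_cent_singleton_of_pairwise_gt (hc : c.Pairwise (· > ·)) (ha : a ∈ c) :
    c ∈ Cent [a] := by
  obtain ⟨d, e, rfl⟩ := append_of_mem ha
  have he : ∀ z ∈ e, z < a := (pairwise_cons.1 (pairwise_append.1 hc).2.1).1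
  simpa [Cent] using kEquiv_bump le_rfl hc he

/-- A list of strictly decreasing words, each with a letter `a` that bounds the letters of all
later words from below. The columns of a semistandard tableau, read from bottom to top, have this
property; it retains just enough of the shape to yield a weakly increasing subword meeting every
column. -/
inductive IsColumnList : List (List ℕ) → Prop
  | nil : IsColumnList []
  | cons {c : List ℕ} {L : List (List ℕ)} {a : ℕ} (hc : c.Pairwise (· > ·)) (hac : a ∈ c)
      (haL : ∀ z ∈ L.flatten, a ≤ z) (hL : IsColumnList L) : IsColumnList (c :: L)

theorem IsColumnList.pairwise_gt (hL : IsColumnList L) : ∀ c ∈ L, c.Pairwise (· > ·) := by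
  induction hL with
  | nil => simp
  | cons hc _ _ _ ih => exact forall_mem_cons.2 ⟨hc, ih⟩

theorem IsColumnList.hasIncSubword (hL : IsColumnList L) :
    HasIncSubword L.flatten univ L.length := by
  induction hL with
  | nil => exact ⟨[], by simp⟩
  | @cons c L a _ hac haL _ ih =>
    obtain ⟨s, hs, hsort, hlen, -⟩ := ih
    exact ⟨a :: s, (singleton_sublist.2 hac).append hs,
      pairwise_cons.2 ⟨fun z hz => haL z (hs.subset hz), hsort⟩, by simp [hlen], by simp⟩

theorem pairwise_gt_replace (hxy : x ≤ y) (hc : (d ++ y :: e).Pairwise (· > ·))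
    (he : ∀ z ∈ e, z < x) : (d ++ x :: e).Pairwise (· > ·) := by
  simp only [pairwise_append, pairwise_cons, forall_mem_cons] at hc ⊢
  exact ⟨hc.1, ⟨he, hc.2.1.2⟩, fun i hi => ⟨hxy.trans_lt (hc.2.2 i hi).1, (hc.2.2 i hi).2⟩⟩

theorem IsColumnList.exists_insert (hL : IsColumnList L) (x : ℕ) :
    ∃ L', IsColumnList L' ∧ KEquiv (x :: L.flatten) L'.flatten := by
  induction hL generalizing x with
  | nil => exact ⟨[[x]], .cons (a := x) (by simp) (by simp) (by simp) .nil, .refl _⟩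
  | @cons c L a hc hac haL hL ih =>
    obtain ⟨d, e, rfl, hd, he⟩ :=
      exists_append_of_pairwise (p := (x ≤ ·)) (fun _ _ hgt hle => hle.trans hgt.le) hc
    simp only [not_le] at he
    obtain rfl | ⟨d, y, rfl⟩ := d.eq_nil_or_concat
    · exact ⟨(x :: e) :: L, .cons (pairwise_cons.2 ⟨he, hc⟩) (mem_cons_of_mem x hac) haL hL,
        .refl _⟩
    · rw [concat_eq_append, append_assoc, singleton_append] at *
      have hxy : x ≤ y := hd y (by simp)
      obtain ⟨L', hL', hyL⟩ := ih y
      obtain ⟨b, hb, hby, hba⟩ : ∃ b ∈ d ++ x :: e, b ≤ y ∧ b ≤ a := by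
        obtain had | hae := mem_append.1 (append_cons d y e ▸ hac)
        · exact ⟨x, by simp, hxy, hd a had⟩
        · exact ⟨a, by simp [hae], (he a hae).le.trans hxy, le_rfl⟩
      refine ⟨(d ++ x :: e) :: L', .cons (pairwise_gt_replace hxy hc he) hb ?_ hL', ?_⟩
      · intro z hz
        obtain rfl | hz := mem_cons.1 (hyL.perm.mem_iff.2 hz)
        · exact hby
        · exact hba.trans (haL z hz)
      · have hbump := (kEquiv_bump hxy hc he).append_right L.flatten
        have hrest := hyL.append_left (d ++ x :: e)
        simp only [flatten_cons, append_assoc, cons_append, nil_append] at hbump hrest ⊢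
        exact hbump.trans hrest

theorem exists_isColumnList (w : List ℕ) : ∃ L, IsColumnList L ∧ KEquiv w L.flatten := by
  induction w with
  | nil => exact ⟨[], .nil, .refl _⟩
  | cons x w ih =>
    obtain ⟨L, hL, hwL⟩ := ih
    obtain ⟨L', hL', hLL'⟩ := hL.exists_insert x
    exact ⟨L', hL', (hwL.append_left [x]).trans hLL'⟩

theorem IsColumnList.flatten_mem_cent_singleton (hL : IsColumnList L)
    (hcount : L.length ≤ L.flatten.count a) : L.flatten ∈ Cent [a] :=
  have hnodup : ∀ c ∈ L, c.Nodup := fun c hc => (hL.pairwise_gt c hc).imp ne_of_gt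
  flatten_mem_cent fun c hc => mem_cent_singleton_of_pairwise_gt (hL.pairwise_gt c hc)
    (mem_of_length_le_count_flatten hnodup hcount c hc)

theorem mem_cent_singleton_of_forall_hasIncSubword
    (h : ∀ n, HasIncSubword w univ n → n ≤ w.count a) : w ∈ Cent [a] := by
  obtain ⟨L, hL, hwL⟩ := exists_isColumnList w
  have hlen : L.length ≤ w.count a := h _ (hwL.hasIncSubword_iff.2 hL.hasIncSubword)
  rw [hwL.perm.count_eq a] at hlen
  exact (mem_cent_congr hwL).2 (hL.flatten_mem_cent_singleton hlen)

end Columns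

theorem mem_cent_replicate_iff {a k : ℕ} {w : List ℕ} (hk : 0 < k) :
    w ∈ Cent (replicate k a) ↔ ∀ n, HasIncSubword w univ n → n ≤ w.count a := by
  refine ⟨fun hw n h => h.le_count hk hw, fun h => ?_⟩
  simpa using
    cent_subset_cent_flatten_replicate k [a] (mem_cent_singleton_of_forall_hasIncSubword h)

end Plactic

open Plactic in
theorem stmt_12 (a k : ℕ) (ha : 0 < a) (hk : 0 < k) :
    Cent (List.replicate k a) = Cent [a] := by
  ext w
  rw [mem_cent_replicate_iff hk, ← List.replicate_one, mem_cent_replicate_iff one_pos]
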